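/- (Uniform interpolation in classical propositional logic.) Let p̄ and q̄ be disjoint finite sets of propositional variables and ψ a classical propositional formula with variables among p̄ ∪ q̄. Define φ := ⋁_{b ∈ {⊥,⊤}^p̄} ψ[p̄/b], the disjunction over all substitutions of truth-value constants for the variables in p̄. Then: the variables of φ are among q̄; ψ ⊨ φ; and for every formula θ whose variables are disjoint from p̄, ψ ⊨ θ implies φ ⊨ θ. Dually, the formula ⋀_{b ∈ {⊥,⊤}^p̄} ψ[p̄/b] has variables among q̄, satisfies ⋀_{b ∈ {⊥,⊤}^p̄} ψ[p̄/b] ⊨ ψ, and for every formula χ with variables disjoint from p̄, χ ⊨ ψ implies χ ⊨ ⋀_{b ∈ {⊥,⊤}^p̄} ψ[p̄/b]. -/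

import Mathlib

/-!
Evaluating `ψ[p̄/b]` at `v` is the same as evaluating `ψ` at the valuation that agrees with `b` on
`p̄` and with `v` elsewhere (`CForm.eval_substConst`). Hence `⋁_b ψ[p̄/b]` holds at `v` exactly when
`ψ` holds at some valuation agreeing with `v` off `p̄`, and `⋀_b ψ[p̄/b]` exactly when `ψ` holds at
all of them (`eval_bigOr_allSubsts`, `eval_bigAnd_allSubsts`): the two formulas are the
existential and universal quantifications of `ψ` over `p̄`. The interpolation properties are then
the adjunction rules for these quantifiers, since a formula without variables from `p̄` has the same
value at valuations that agree off `p̄` (`CForm.eval_congr`).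
-/

/-- Classical propositional formulas over variables indexed by `ℕ`. -/
inductive CForm : Type
  | var : ℕ → CForm
  | bot : CForm
  | top : CForm
  | and : CForm → CForm → CForm
  | or : CForm → CForm → CForm
  | imp : CForm → CForm → CForm

/-- The set of propositional variables occurring in a formula. -/
def CForm.vars : CForm → Finset ℕ
  | .var p => {p}
  | .bot => ∅
  | .top => ∅
  | .and a b => a.vars ∪ b.vars
  | .or a b => a.vars ∪ b.vars
  | .imp a b => a.vars ∪ b.vars

/-- Evaluation of a formula under a Boolean valuation. -/
def CForm.eval (v : ℕ → Bool) : CForm → Bool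
  | .var p => v p
  | .bot => false
  | .top => true
  | .and a b => a.eval v && b.eval v
  | .or a b => a.eval v || b.eval v
  | .imp a b => !a.eval v || b.eval v

/-- Classical semantic entailment. -/
def CEntails (φ ψ : CForm) : Prop :=
  ∀ v : ℕ → Bool, φ.eval v = true → ψ.eval v = true

/-- Substitute, for each variable in `pbar`, the truth-value constant given by
`b` (and leave all other variables unchanged). -/
def CForm.substConst (pbar : Finset ℕ) (b : ℕ → Bool) : CForm → CForm
  | .var x => if x ∈ pbar then (if b x then .top else .bot) else .var x
  | .bot => .bot
  | .top => .top
  | .and a c => .and (a.substConst pbar b) (c.substConst pbar b)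
  | .or a c => .or (a.substConst pbar b) (c.substConst pbar b)
  | .imp a c => .imp (a.substConst pbar b) (c.substConst pbar b)

/-- Disjunction of a list of formulas. -/
def bigOr : List CForm → CForm
  | [] => .bot
  | a :: l => .or a (bigOr l)

/-- Conjunction of a list of formulas. -/
def bigAnd : List CForm → CForm
  | [] => .top
  | a :: l => .and a (bigAnd l)

/-- The list of all variants `ψ[p̄/b]` of `ψ` obtained by substituting a vector
of truth values for the variables in `p̄`. -/
noncomputable def allSubsts (pbar : Finset ℕ) (ψ : CForm) : List CForm :=
  (Finset.univ : Finset (↥pbar → Bool)).toList.map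
    (fun bb => ψ.substConst pbar (fun x => if h : x ∈ pbar then bb ⟨x, h⟩ else false))

theorem CForm.eval_congr {v w : ℕ → Bool} (φ : CForm) (h : ∀ x ∈ φ.vars, v x = w x) :
    φ.eval v = φ.eval w := by
  induction φ with
  | var p => exact h p (by simp [CForm.vars])
  | bot => rfl
  | top => rfl
  | and a c iha ihc | or a c iha ihc | imp a c iha ihc =>
    simp only [CForm.vars, Finset.mem_union] at h
    simp only [CForm.eval, iha fun x hx => h x (Or.inl hx), ihc fun x hx => h x (Or.inr hx)]

theorem CForm.eval_substConst (pbar : Finset ℕ) (b v : ℕ → Bool) (φ : CForm) :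
    (φ.substConst pbar b).eval v = φ.eval (fun x => if x ∈ pbar then b x else v x) := by
  induction φ with
  | var p =>
    simp only [CForm.substConst, CForm.eval]
    split_ifs with h hb <;> simp_all [CForm.eval]
  | bot => rfl
  | top => rfl
  | and a c iha ihc | or a c iha ihc | imp a c iha ihc =>
    simp only [CForm.substConst, CForm.eval, iha, ihc]

theorem CForm.vars_substConst_subset (pbar : Finset ℕ) (b : ℕ → Bool) (φ : CForm) :
    (φ.substConst pbar b).vars ⊆ φ.vars \ pbar := by
  induction φ with
  | var p =>
    simp only [CForm.substConst]
    split_ifs with h hb <;> simp [CForm.vars, h]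
  | bot => simp [CForm.substConst, CForm.vars]
  | top => simp [CForm.substConst, CForm.vars]
  | and a c iha ihc | or a c iha ihc | imp a c iha ihc =>
    simp only [CForm.substConst, CForm.vars, Finset.union_sdiff_distrib]
    exact Finset.union_subset_union iha ihc

theorem eval_bigOr (v : ℕ → Bool) (l : List CForm) :
    (bigOr l).eval v = true ↔ ∃ φ ∈ l, φ.eval v = true := by
  induction l with
  | nil => simp [bigOr, CForm.eval]
  | cons a l ih => simp [bigOr, CForm.eval, ih]

theorem eval_bigAnd (v : ℕ → Bool) (l : List CForm) :
    (bigAnd l).eval v = true ↔ ∀ φ ∈ l, φ.eval v = true := by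
  induction l with
  | nil => simp [bigAnd, CForm.eval]
  | cons a l ih => simp [bigAnd, CForm.eval, ih]

theorem vars_bigOr_subset {s : Finset ℕ} {l : List CForm} (h : ∀ φ ∈ l, φ.vars ⊆ s) :
    (bigOr l).vars ⊆ s := by
  induction l with
  | nil => simp [bigOr, CForm.vars]
  | cons a l ih =>
    rw [List.forall_mem_cons] at h
    exact Finset.union_subset h.1 (ih h.2)

theorem vars_bigAnd_subset {s : Finset ℕ} {l : List CForm} (h : ∀ φ ∈ l, φ.vars ⊆ s) :
    (bigAnd l).vars ⊆ s := by
  induction l with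
  | nil => simp [bigAnd, CForm.vars]
  | cons a l ih =>
    rw [List.forall_mem_cons] at h
    exact Finset.union_subset h.1 (ih h.2)

theorem vars_subset_of_mem_allSubsts {pbar qbar : Finset ℕ} {ψ φ : CForm}
    (hψ : ψ.vars ⊆ pbar ∪ qbar) (hφ : φ ∈ allSubsts pbar ψ) : φ.vars ⊆ qbar := by
  obtain ⟨bb, -, rfl⟩ := List.mem_map.1 hφ
  exact (CForm.vars_substConst_subset _ _ ψ).trans (sdiff_le_iff.2 hψ)

/-- The values at `v` of the formulas `ψ[p̄/b]` are the values of `ψ` at the valuations that agree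
with `v` off `p̄`. -/
theorem exists_mem_allSubsts_eval (pbar : Finset ℕ) (ψ : CForm) (v : ℕ → Bool) (t : Bool) :
    (∃ φ ∈ allSubsts pbar ψ, φ.eval v = t) ↔
      ∃ w : ℕ → Bool, (∀ x ∉ pbar, w x = v x) ∧ ψ.eval w = t := by
  constructor
  · rintro ⟨φ, hφ, h⟩
    obtain ⟨bb, -, rfl⟩ := List.mem_map.1 hφ
    rw [CForm.eval_substConst] at h
    exact ⟨_, fun x hx => if_neg hx, h⟩
  · rintro ⟨w, hw, h⟩
    -- The vector `b` is the restriction of `w` to `p̄`.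
    refine ⟨_, List.mem_map.2 ⟨fun x => w x, by simp, rfl⟩, ?_⟩
    rw [CForm.eval_substConst, ← h]
    refine CForm.eval_congr ψ fun x _ => ?_
    by_cases hx : x ∈ pbar <;> simp [hx, hw]

theorem eval_bigOr_allSubsts (pbar : Finset ℕ) (ψ : CForm) (v : ℕ → Bool) :
    (bigOr (allSubsts pbar ψ)).eval v = true ↔
      ∃ w : ℕ → Bool, (∀ x ∉ pbar, w x = v x) ∧ ψ.eval w = true := by
  rw [eval_bigOr, exists_mem_allSubsts_eval]

theorem eval_bigAnd_allSubsts (pbar : Finset ℕ) (ψ : CForm) (v : ℕ → Bool) :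
    (bigAnd (allSubsts pbar ψ)).eval v = true ↔
      ∀ w : ℕ → Bool, (∀ x ∉ pbar, w x = v x) → ψ.eval w = true := by
  have h := not_congr (exists_mem_allSubsts_eval pbar ψ v false)
  push Not at h
  simpa [eval_bigAnd] using h

/-- A formula without variables from `p̄` does not distinguish valuations that agree off `p̄`. -/
theorem CForm.eval_eq_of_disjoint {pbar : Finset ℕ} {θ : CForm} (hθ : Disjoint θ.vars pbar)
    {v w : ℕ → Bool} (h : ∀ x ∉ pbar, w x = v x) : θ.eval w = θ.eval v :=
  CForm.eval_congr θ fun x hx => h x (Finset.disjoint_left.1 hθ hx)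

/-- **Uniform interpolation in classical propositional logic.**
The disjunction `⋁_b ψ[p̄/b]` is a right uniform interpolant of ψ with respect
to the variables p̄, and the conjunction `⋀_b ψ[p̄/b]` is a left uniform
interpolant of ψ with respect to p̄. -/
theorem classical_uniform_interpolation (pbar qbar : Finset ℕ)
    (hdisj : Disjoint pbar qbar) (ψ : CForm) (hψ : ψ.vars ⊆ pbar ∪ qbar) :
    (bigOr (allSubsts pbar ψ)).vars ⊆ qbar ∧
    CEntails ψ (bigOr (allSubsts pbar ψ)) ∧
    (∀ θ : CForm, Disjoint θ.vars pbar →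
      CEntails ψ θ → CEntails (bigOr (allSubsts pbar ψ)) θ) ∧
    (bigAnd (allSubsts pbar ψ)).vars ⊆ qbar ∧
    CEntails (bigAnd (allSubsts pbar ψ)) ψ ∧
    (∀ χ : CForm, Disjoint χ.vars pbar →
      CEntails χ ψ → CEntails χ (bigAnd (allSubsts pbar ψ))) := by
  refine ⟨vars_bigOr_subset fun φ hφ => vars_subset_of_mem_allSubsts hψ hφ, ?_, ?_,
    vars_bigAnd_subset fun φ hφ => vars_subset_of_mem_allSubsts hψ hφ, ?_, ?_⟩
  · intro v hv
    exact (eval_bigOr_allSubsts pbar ψ v).2 ⟨v, fun _ _ => rfl, hv⟩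
  · intro θ hθ h v hv
    obtain ⟨w, hw, hψw⟩ := (eval_bigOr_allSubsts pbar ψ v).1 hv
    rw [← CForm.eval_eq_of_disjoint hθ hw]
    exact h w hψw
  · intro v hv
    exact (eval_bigAnd_allSubsts pbar ψ v).1 hv v fun _ _ => rfl
  · intro χ hχ h v hv
    refine (eval_bigAnd_allSubsts pbar ψ v).2 fun w hw => h w ?_
    rwa [CForm.eval_eq_of_disjoint hχ hw]
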